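/- The sequence 56211383760397 + 44546738095860·k is prime for each k = 0, 1, ..., 22, giving a 23-term arithmetic progression of primes. -/

import Mathlib

/-!
By Lucas's criterion, `p` is prime as soon as some `a` has order exactly `p - 1` modulo `p`, and
this can be checked once the prime factorization of `p - 1` is known. Following Pratt, the large
prime factors are certified in the same way; since each of them is smaller than `p`, the recursion
terminates. Prime factors below `10 ^ 6` are left to trial division.
-/

/-- Modular exponentiation `a ^ e % m` by repeated squaring along the binary digits of `e`, so that
the kernel can evaluate it for large `e` without ever forming `a ^ e`. -/
def powMod (m a e : ℕ) : ℕ :=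
  e.binaryRec (1 % m) fun b _ r ↦ r ^ 2 * a ^ b.toNat % m

theorem powMod_eq_pow_mod (m a e : ℕ) : powMod m a e = a ^ e % m := by
  induction e using Nat.binaryRec' with
  | zero => simp [powMod]
  | bit b n hb ih =>
    calc powMod m a (Nat.bit b n)
        = powMod m a n ^ 2 * a ^ b.toNat % m := Nat.binaryRec_eq b n (.inr hb)
      _ = (a ^ n) ^ 2 * a ^ b.toNat % m := by rw [ih, Nat.mul_mod, ← Nat.pow_mod, ← Nat.mul_mod]
      _ = a ^ Nat.bit b n % m := by rw [Nat.bit_val, pow_add, mul_comm 2, pow_mul]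

theorem powMod_eq_one_mod_iff (m a e : ℕ) : powMod m a e = 1 % m ↔ (a : ZMod m) ^ e = 1 := by
  rw [powMod_eq_pow_mod, ← ZMod.natCast_eq_natCast_iff', Nat.cast_pow, Nat.cast_one]

/-- The data of a Lucas primality certificate for `modulus`: a candidate primitive root `witness`,
and the prime factors of `modulus - 1`, listed with multiplicity. -/
structure LucasCertificate where
  modulus : ℕ
  witness : ℕ
  factors : List ℕ

namespace LucasCertificate

/-- The conditions of Lucas's criterion, except for the primality of the listed factors, which is
left to other certificates. -/
structure IsValid (c : LucasCertificate) : Prop where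
  prod_factors_add_one : c.factors.prod + 1 = c.modulus
  pow_eq_one : (c.witness : ZMod c.modulus) ^ (c.modulus - 1) = 1
  pow_div_ne_one : ∀ q ∈ c.factors, (c.witness : ZMod c.modulus) ^ ((c.modulus - 1) / q) ≠ 1

theorem isValid_iff_powMod (c : LucasCertificate) :
    c.IsValid ↔ c.factors.prod + 1 = c.modulus ∧
      powMod c.modulus c.witness (c.modulus - 1) = 1 % c.modulus ∧
      ∀ q ∈ c.factors, powMod c.modulus c.witness ((c.modulus - 1) / q) ≠ 1 % c.modulus := by
  simp only [ne_eq, powMod_eq_one_mod_iff]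
  exact ⟨fun ⟨hprod, hone, hne⟩ ↦ ⟨hprod, hone, hne⟩,
    fun ⟨hprod, hone, hne⟩ ↦ ⟨hprod, hone, hne⟩⟩

instance (c : LucasCertificate) : Decidable c.IsValid :=
  decidable_of_iff' _ c.isValid_iff_powMod

theorem IsValid.prime_modulus {c : LucasCertificate} (hc : c.IsValid)
    (hfactors : ∀ q ∈ c.factors, q.Prime) : c.modulus.Prime := by
  refine lucas_primality c.modulus c.witness hc.pow_eq_one fun q hq hdvd ↦ ?_
  have hdvd_prod : q ∣ c.factors.prod := by
    rwa [← hc.prod_factors_add_one, Nat.add_sub_cancel] at hdvd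
  exact hc.pow_div_ne_one q <|
    mem_list_primes_of_dvd_prod hq.prime (fun r hr ↦ (hfactors r hr).prime) hdvd_prod

theorem IsValid.lt_modulus_of_mem_factors {c : LucasCertificate} (hc : c.IsValid)
    {q : ℕ} (hq : q ∈ c.factors) : q < c.modulus := by
  have hprod : c.factors.prod ≠ 0 := by
    intro hzero
    have : Subsingleton (ZMod c.modulus) :=
      ZMod.subsingleton_iff.mpr (by rw [← hc.prod_factors_add_one, hzero])
    exact hc.pow_div_ne_one q hq (Subsingleton.elim _ _)
  calc q ≤ c.factors.prod := Nat.le_of_dvd (Nat.pos_of_ne_zero hprod) (List.dvd_prod hq)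
    _ < c.modulus := Nat.lt_of_succ_le hc.prod_factors_add_one.le

theorem prime_of_mem_map_modulus {T : List LucasCertificate} (hvalid : ∀ c ∈ T, c.IsValid)
    (hfactors : ∀ c ∈ T, ∀ q ∈ c.factors, q ∈ T.map modulus ∨ q.Prime)
    {p : ℕ} (hp : p ∈ T.map modulus) : p.Prime := by
  induction p using Nat.strong_induction_on with
  | _ p ih =>
    obtain ⟨c, hc, rfl⟩ := List.mem_map.mp hp
    refine (hvalid c hc).prime_modulus fun q hq ↦ ?_
    rcases hfactors c hc q hq with hmem | hprime
    · exact ih q ((hvalid c hc).lt_modulus_of_mem_factors hq) hmem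
    · exact hprime

end LucasCertificate

/-- Certificates for the 23 terms of the progression, in increasing order, followed by those for
the prime factors above `10 ^ 6` that occur in other certificates. -/
def progressionCertificates : List LucasCertificate :=
  [⟨56211383760397, 2, [2, 2, 3, 109, 127, 751, 450581]⟩,
   ⟨100758121856257, 5, [2, 2, 2, 2, 2, 2, 2, 2, 3, 43, 3051057469]⟩,
   ⟨145304859952117, 2, [2, 2, 3, 3, 3, 53, 1607, 3557, 4441]⟩,
   ⟨189851598047977, 5, [2, 2, 2, 3, 12409, 637479511]⟩,
   ⟨234398336143837, 5, [2, 2, 3, 173, 108947, 1036363]⟩,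
   ⟨278945074239697, 5, [2, 2, 2, 2, 3, 3, 47, 41215288747]⟩,
   ⟨323491812335557, 2, [2, 2, 3, 59, 456909339457]⟩,
   ⟨368038550431417, 5, [2, 2, 2, 3, 9203, 1666297903]⟩,
   ⟨412585288527277, 2, [2, 2, 3, 3, 302971, 37827721]⟩,
   ⟨457132026623137, 5, [2, 2, 2, 2, 2, 3, 83, 101, 568029577]⟩,
   ⟨501678764718997, 2, [2, 2, 3, 41806563726583]⟩,
   ⟨546225502814857, 7, [2, 2, 2, 3, 3, 3, 6761, 374030731]⟩,
   ⟨590772240910717, 2, [2, 2, 3, 31, 1588097421803]⟩,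
   ⟨635318979006577, 7, [2, 2, 2, 2, 3, 61, 61, 293, 12140129]⟩,
   ⟨679865717102437, 2, [2, 2, 3, 3, 71, 139, 1913583829]⟩,
   ⟨724412455198297, 7, [2, 2, 2, 3, 29, 131, 24953, 318407]⟩,
   ⟨768959193294157, 2, [2, 2, 3, 73, 877807298281]⟩,
   ⟨813505931390017, 5, [2, 2, 2, 2, 2, 2, 3, 3, 241, 569, 1951, 5279]⟩,
   ⟨858052669485877, 2, [2, 2, 3, 233, 306885790231]⟩,
   ⟨902599407581737, 7, [2, 2, 2, 3, 37608308649239]⟩,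
   ⟨947146145677597, 5, [2, 2, 3, 3, 3, 3, 2923290573079]⟩,
   ⟨991692883773457, 5, [2, 2, 2, 2, 3, 20660268411947]⟩,
   ⟨1036239621869317, 5, [2, 2, 3, 1319, 25589, 2558473]⟩,
   ⟨41806563726583, 5, [2, 3, 3, 2357, 985399607]⟩,
   ⟨37608308649239, 11, [2, 18804154324619]⟩,
   ⟨20660268411947, 2, [2, 61, 169346462393]⟩,
   ⟨18804154324619, 2, [2, 13, 29, 43, 3433, 168943]⟩,
   ⟨2923290573079, 6, [2, 3, 227053, 2145821]⟩,
   ⟨1588097421803, 2, [2, 794048710901]⟩,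
   ⟨877807298281, 17, [2, 2, 2, 3, 5, 11, 19, 2341, 14951]⟩,
   ⟨794048710901, 3, [2, 2, 5, 5, 17, 167, 257, 10883]⟩,
   ⟨456909339457, 5, [2, 2, 2, 2, 2, 2, 3, 3, 3, 17, 29, 43, 12473]⟩,
   ⟨306885790231, 3, [2, 3, 5, 347, 29479903]⟩,
   ⟨169346462393, 3, [2, 2, 2, 37, 83, 419, 16451]⟩,
   ⟨41215288747, 5, [2, 3, 38371, 179021]⟩,
   ⟨3051057469, 2, [2, 2, 3, 19, 211, 63421]⟩,
   ⟨1913583829, 2, [2, 2, 3, 13, 677, 18119]⟩,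
   ⟨1666297903, 3, [2, 3, 43, 409, 15791]⟩,
   ⟨985399607, 5, [2, 373, 1320911]⟩,
   ⟨637479511, 7, [2, 3, 5, 3779, 5623]⟩,
   ⟨568029577, 7, [2, 2, 2, 3, 23667899]⟩,
   ⟨374030731, 17, [2, 3, 3, 3, 5, 1385299]⟩,
   ⟨37827721, 33, [2, 2, 2, 3, 3, 5, 7, 17, 883]⟩,
   ⟨29479903, 3, [2, 3, 41, 293, 409]⟩,
   ⟨23667899, 2, [2, 1459, 8111]⟩,
   ⟨12140129, 3, [2, 2, 2, 2, 2, 7, 11, 13, 379]⟩,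
   ⟨2558473, 23, [2, 2, 2, 3, 7, 97, 157]⟩,
   ⟨2145821, 3, [2, 2, 5, 31, 3461]⟩,
   ⟨1385299, 2, [2, 3, 3, 76961]⟩,
   ⟨1320911, 7, [2, 5, 31, 4261]⟩,
   ⟨1036363, 2, [2, 3, 53, 3259]⟩]

theorem isValid_progressionCertificates : ∀ c ∈ progressionCertificates, c.IsValid := by
  decide +kernel

theorem mem_or_prime_of_mem_factors_progressionCertificates :
    ∀ c ∈ progressionCertificates, ∀ q ∈ c.factors,
      q ∈ progressionCertificates.map LucasCertificate.modulus ∨ q.Prime := by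
  -- `Nat.minFac` stops at `√q`, unlike the default decision procedure for `Nat.Prime`.
  simp only [Nat.prime_def_minFac]
  decide +kernel

theorem progression_mem_moduli :
    ∀ k ≤ 22, 56211383760397 + 44546738095860 * k ∈
      progressionCertificates.map LucasCertificate.modulus := by
  decide +kernel

/-- The 23-term arithmetic progression of primes found by Frind, Jobling and
Underwood: `56211383760397 + 44546738095860·k` is prime for `k = 0, …, 22`. -/
theorem frind_jobling_underwood (k : ℕ) (hk : k ≤ 22) :
    Nat.Prime (56211383760397 + 44546738095860 * k) :=
  LucasCertificate.prime_of_mem_map_modulus isValid_progressionCertificates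
    mem_or_prime_of_mem_factors_progressionCertificates (progression_mem_moduli k hk)
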